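/- Sufficient condition for the perturbed state chance constraint (condition (S)): let Σ_q be real symmetric positive semidefinite, let C_q and C be N-step control sequences with the same feedforward terms (so the mean sequence μ_k is common), let γ_k be defined by γ_0 = I and γ_{k+1} = (A + B K_k(C)) γ_k (A + B K_k(C))^T, and suppose the state chance constraint holds strictly at step k under (Σ_q, C_q) with slack z_{s,k} := β_x − α_x^T μ_k − c_x √(α_x^T Σ_k(Σ_q, C_q) α_x) > 0. If ε ≥ 0 satisfies c_x √ε √(α_x^T γ_k α_x) ≤ z_{s,k} − c_x [ √(α_x^T Σ_k(Σ_q, C) α_x) − √(α_x^T Σ_k(Σ_q, C_q) α_x) ], then the state chance constraint holds at step k for the covariance initialized at Σ_q + εI under C, i.e. c_x √(α_x^T Σ_k(Σ_q + εI, C) α_x) + α_x^T μ_k ≤ β_x. -/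

import Mathlib

open Matrix

/-- Largest eigenvalue of a real symmetric matrix (junk value `0` if not symmetric). -/
noncomputable def lamMax {n : ℕ} (M : Matrix (Fin n) (Fin n) ℝ) : ℝ :=
  if h : M.IsHermitian then ⨆ i, h.eigenvalues i else 0

/-- Smallest eigenvalue of a real symmetric matrix (junk value `0` if not symmetric). -/
noncomputable def lamMin {n : ℕ} (M : Matrix (Fin n) (Fin n) ℝ) : ℝ :=
  if h : M.IsHermitian then ⨅ i, h.eigenvalues i else 0

/-- Covariance dynamics `Σ_{k+1} = (A + B K_k) Σ_k (A + B K_k)ᵀ + D Dᵀ`. -/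
def covSeq {n m : ℕ} (A : Matrix (Fin n) (Fin n) ℝ) (B : Matrix (Fin n) (Fin m) ℝ)
    (D : Matrix (Fin n) (Fin n) ℝ) (K : ℕ → Matrix (Fin m) (Fin n) ℝ)
    (S0 : Matrix (Fin n) (Fin n) ℝ) : ℕ → Matrix (Fin n) (Fin n) ℝ
  | 0 => S0
  | k + 1 => (A + B * K k) * covSeq A B D K S0 k * (A + B * K k)ᵀ + D * Dᵀ

/-- Mean dynamics `μ_{k+1} = A μ_k + B v_k`. -/
def meanSeq {n m : ℕ} (A : Matrix (Fin n) (Fin n) ℝ) (B : Matrix (Fin n) (Fin m) ℝ)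
    (v : ℕ → Fin m → ℝ) (mu0 : Fin n → ℝ) : ℕ → Fin n → ℝ
  | 0 => mu0
  | k + 1 => A.mulVec (meanSeq A B v mu0 k) + B.mulVec (v k)

/-- Perturbation propagators `γ_0 = I`, `γ_{k+1} = (A + B K_k) γ_k (A + B K_k)ᵀ`. -/
def gammaSeq {n m : ℕ} (A : Matrix (Fin n) (Fin n) ℝ) (B : Matrix (Fin n) (Fin m) ℝ)
    (K : ℕ → Matrix (Fin m) (Fin n) ℝ) : ℕ → Matrix (Fin n) (Fin n) ℝ
  | 0 => 1
  | k + 1 => (A + B * K k) * gammaSeq A B K k * (A + B * K k)ᵀ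

/-- A planning scene: state/control constraint data `α_x, β_x, c_x, α_u, β_u, c_u`
with `c_x, c_u ≥ 0`. -/
structure Scene (n m : ℕ) where
  ax : Fin n → ℝ
  au : Fin m → ℝ
  bx : ℝ
  bu : ℝ
  cx : ℝ
  cu : ℝ
  cx_nonneg : 0 ≤ cx
  cu_nonneg : 0 ≤ cu

/-- `Steers A B D sc N K v μp Sp μq Sq` means `(μp, Sp) →_N^{(K, v)} (μq, Sq)`:
the mean and covariance trajectories initialized at `(μp, Sp)` and driven by the
control sequence `(K, v)` satisfy the state and control chance constraints for
`k = 0, …, N-1`, the terminal mean constraint `μ_N = μq`, and the terminal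
covariance constraint `λ_max(Σ_N) ≤ λ_min(Σ_q)`. -/
def Steers {n m : ℕ} (A : Matrix (Fin n) (Fin n) ℝ) (B : Matrix (Fin n) (Fin m) ℝ)
    (D : Matrix (Fin n) (Fin n) ℝ) (sc : Scene n m) (N : ℕ)
    (K : ℕ → Matrix (Fin m) (Fin n) ℝ) (v : ℕ → Fin m → ℝ)
    (μp : Fin n → ℝ) (Sp : Matrix (Fin n) (Fin n) ℝ)
    (μq : Fin n → ℝ) (Sq : Matrix (Fin n) (Fin n) ℝ) : Prop :=
  (∀ k < N, sc.cx * Real.sqrt (sc.ax ⬝ᵥ (covSeq A B D K Sp k).mulVec sc.ax)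
      + sc.ax ⬝ᵥ meanSeq A B v μp k ≤ sc.bx) ∧
  (∀ k < N, sc.cu * Real.sqrt (sc.au ⬝ᵥ (K k * covSeq A B D K Sp k * (K k)ᵀ).mulVec sc.au)
      + sc.au ⬝ᵥ v k ≤ sc.bu) ∧
  meanSeq A B v μp N = μq ∧
  lamMax (covSeq A B D K Sp N) ≤ lamMin Sq

/-- Concatenation of two (time-indexed) sequences: the first for steps `0,…,N-1`,
then the second, shifted by `N`. -/
def concatSeq {α : Type*} (N : ℕ) (f g : ℕ → α) : ℕ → α :=
  fun k => if k < N then f k else g (k - N)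

/-- Concatenation of `d` sequences with lengths `Ns i`, applied consecutively. -/
def multiConcat {α : Type*} [Zero α] : (d : ℕ) → (Fin d → ℕ) → (Fin d → ℕ → α) → ℕ → α
  | 0, _, _ => fun _ => 0
  | d + 1, Ns, fs =>
      concatSeq (Ns 0) (fs 0) (multiConcat d (fun i => Ns i.succ) (fun i => fs i.succ))

/-- `h`-hop backward reachable set of the distribution `(μ, S)`: all pairs
`(μ_q, Σ_q)` with `Σ_q` positive semidefinite from which some `h*N`-step control
sequence steers to `(μ, S)`. -/
def BRS {n m : ℕ} (A : Matrix (Fin n) (Fin n) ℝ) (B : Matrix (Fin n) (Fin m) ℝ)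
    (D : Matrix (Fin n) (Fin n) ℝ) (sc : Scene n m) (h N : ℕ)
    (μ : Fin n → ℝ) (S : Matrix (Fin n) (Fin n) ℝ) :
    Set ((Fin n → ℝ) × Matrix (Fin n) (Fin n) ℝ) :=
  { p | p.2.PosSemidef ∧
      ∃ (K : ℕ → Matrix (Fin m) (Fin n) ℝ) (v : ℕ → Fin m → ℝ),
        Steers A B D sc (h * N) K v p.1 p.2 μ S }

theorem covSeq_perturb {n m : ℕ} (A : Matrix (Fin n) (Fin n) ℝ) (B : Matrix (Fin n) (Fin m) ℝ)
    (D : Matrix (Fin n) (Fin n) ℝ) (K : ℕ → Matrix (Fin m) (Fin n) ℝ)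
    (S : Matrix (Fin n) (Fin n) ℝ) (ε : ℝ) (k : ℕ) :
    covSeq A B D K (S + ε • (1 : Matrix (Fin n) (Fin n) ℝ)) k
      = covSeq A B D K S k + ε • gammaSeq A B K k := by
  induction k with
  | zero => rfl
  | succ k ih =>
    simp only [covSeq, gammaSeq, ih, Matrix.mul_add, Matrix.add_mul _ _ (A + B * K k)ᵀ,
      Matrix.mul_smul, Matrix.smul_mul]
    abel

theorem covSeq_posSemidef {n m : ℕ} (A : Matrix (Fin n) (Fin n) ℝ)
    (B : Matrix (Fin n) (Fin m) ℝ)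
    (D : Matrix (Fin n) (Fin n) ℝ) (K : ℕ → Matrix (Fin m) (Fin n) ℝ)
    (S : Matrix (Fin n) (Fin n) ℝ) (hS : S.PosSemidef) (k : ℕ) :
    (covSeq A B D K S k).PosSemidef := by
  induction k with
  | zero => exact hS
  | succ k ih =>
    have h1 := ih.mul_mul_conjTranspose_same (A + B * K k)
    have h2 := Matrix.posSemidef_self_mul_conjTranspose D
    rw [Matrix.conjTranspose_eq_transpose_of_trivial] at h1 h2
    exact h1.add h2

theorem gammaSeq_posSemidef {n m : ℕ} (A : Matrix (Fin n) (Fin n) ℝ)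
    (B : Matrix (Fin n) (Fin m) ℝ) (K : ℕ → Matrix (Fin m) (Fin n) ℝ) (k : ℕ) :
    (gammaSeq A B K k).PosSemidef := by
  induction k with
  | zero => exact Matrix.PosSemidef.one
  | succ k ih =>
    have h1 := ih.mul_mul_conjTranspose_same (A + B * K k)
    rw [Matrix.conjTranspose_eq_transpose_of_trivial] at h1
    exact h1

/-- condition (S): sufficient condition for the perturbed state
chance constraint. `Kq` and `K` are the gains of `C_q` and `C`, which share the
feedforward terms `v` (hence the common mean sequence). -/
theorem perturbed_state_chance_constraint {n m : ℕ}
    (A : Matrix (Fin n) (Fin n) ℝ) (B : Matrix (Fin n) (Fin m) ℝ)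
    (D : Matrix (Fin n) (Fin n) ℝ)
    (ax : Fin n → ℝ) (bx cx : ℝ) (hcx : 0 ≤ cx)
    (Sq : Matrix (Fin n) (Fin n) ℝ) (hSq : Sq.PosSemidef)
    (N : ℕ) (Kq K : ℕ → Matrix (Fin m) (Fin n) ℝ) (v : ℕ → Fin m → ℝ)
    (μ0 : Fin n → ℝ) (k : ℕ) (hk : k < N)
    (hslack : 0 < bx - ax ⬝ᵥ meanSeq A B v μ0 k
        - cx * Real.sqrt (ax ⬝ᵥ (covSeq A B D Kq Sq k).mulVec ax))
    (ε : ℝ) (hε : 0 ≤ ε)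
    (hcond : cx * Real.sqrt ε * Real.sqrt (ax ⬝ᵥ (gammaSeq A B K k).mulVec ax)
        ≤ (bx - ax ⬝ᵥ meanSeq A B v μ0 k
            - cx * Real.sqrt (ax ⬝ᵥ (covSeq A B D Kq Sq k).mulVec ax))
          - cx * (Real.sqrt (ax ⬝ᵥ (covSeq A B D K Sq k).mulVec ax)
            - Real.sqrt (ax ⬝ᵥ (covSeq A B D Kq Sq k).mulVec ax))) :
    cx * Real.sqrt (ax ⬝ᵥ (covSeq A B D K
        (Sq + ε • (1 : Matrix (Fin n) (Fin n) ℝ)) k).mulVec ax)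
      + ax ⬝ᵥ meanSeq A B v μ0 k ≤ bx := by
  have hs := (covSeq_posSemidef A B D K Sq hSq k).dotProduct_mulVec_nonneg ax
  have hg := (gammaSeq_posSemidef A B K k).dotProduct_mulVec_nonneg ax
  simp only [star_trivial] at hs hg
  rw [covSeq_perturb, Matrix.add_mulVec, Matrix.smul_mulVec, dotProduct_add, dotProduct_smul,
    smul_eq_mul]
  generalize ax ⬝ᵥ (covSeq A B D K Sq k).mulVec ax = s at *
  generalize ax ⬝ᵥ (gammaSeq A B K k).mulVec ax = g at *
  have key : Real.sqrt (s + ε * g) ≤ Real.sqrt s + Real.sqrt ε * Real.sqrt g := by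
    rw [← Real.sqrt_mul hε, Real.sqrt_le_iff]
    have := mul_nonneg hε hg
    refine ⟨by positivity, ?_⟩
    nlinarith [Real.sq_sqrt hs, Real.sq_sqrt this,
      mul_nonneg (Real.sqrt_nonneg s) (Real.sqrt_nonneg (ε * g))]
  have := mul_le_mul_of_nonneg_left key hcx
  linarith
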